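/- Let G be the CPDAG of the Markov equivalence class of a DAG, let X and Y be distinct nodes, and let p be a possibly directed path from X to Y in G. Then some subsequence of the nodes of p forms an unshielded possibly directed path from X to Y in G. -/

import Mathlib

/-- A directed acyclic graph on node set `V`: a directed edge relation with no
directed cycles (no edge `a → b` together with a directed path from `b` back to `a`). -/
structure Dag (V : Type*) where
  edge : V → V → Prop
  acyclic : ∀ a b : V, edge a b → ¬ Relation.ReflTransGen edge b a

variable {V : Type*}

namespace Dag

/-- `a` is an ancestor of `b` (equivalently, `b` is a descendant of `a`):
there is a directed path from `a` to `b`; every node is its own ancestor. -/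
def Anc (D : Dag V) (a b : V) : Prop := Relation.ReflTransGen D.edge a b

/-- `a` and `b` are adjacent (joined by an edge in either direction). -/
def Adj (D : Dag V) (a b : V) : Prop := D.edge a b ∨ D.edge b a

/-- The parents of `x` in the DAG `D`. -/
def Pa (D : Dag V) (x : V) : Set V := {a | D.edge a x}

/-- The Markov blanket of `x`: parents, children, and parents of children of `x`
(excluding `x` itself). -/
def MB (D : Dag V) (x : V) : Set V :=
  {v | v ≠ x ∧ (D.edge v x ∨ D.edge x v ∨ ∃ c : V, D.edge x c ∧ D.edge v c)}

end Dag

/-- A path between `x` and `y` with respect to an adjacency relation `A`: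
a sequence of distinct nodes, starting at `x` and ending at `y`, in which
consecutive nodes are adjacent. `n` is the number of edges of the path. -/
structure GPath (A : V → V → Prop) (x y : V) where
  n : ℕ
  f : Fin (n + 1) → V
  inj : Function.Injective f
  first : f ⟨0, by omega⟩ = x
  last : f ⟨n, by omega⟩ = y
  adj : ∀ i : Fin n, A (f i.castSucc) (f i.succ)

namespace GPath

/-- The non-endpoint node at position `i` of the path `p` is a collider with respect
to the directed edge relation `E`: both incident edges of the path point into it. -/
def ColliderAt {A : V → V → Prop} {x y : V} (p : GPath A x y)
    (E : V → V → Prop) (i : ℕ) : Prop :=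
  ∃ (_ : 0 < i) (_ : i < p.n),
    E (p.f ⟨i - 1, by omega⟩) (p.f ⟨i, by omega⟩) ∧
    E (p.f ⟨i + 1, by omega⟩) (p.f ⟨i, by omega⟩)

/-- The path `p` is blocked by the node set `S` in the DAG `D`: it contains a
non-collider that lies in `S`, or a collider such that neither the collider nor any
of its descendants lies in `S`. -/
def Blocked {A : V → V → Prop} {x y : V} (p : GPath A x y)
    (D : Dag V) (S : Set V) : Prop :=
  ∃ (i : ℕ) (_ : 0 < i) (_ : i < p.n),
    (¬ p.ColliderAt D.edge i ∧ p.f ⟨i, by omega⟩ ∈ S) ∨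
    (p.ColliderAt D.edge i ∧ ∀ d : V, D.Anc (p.f ⟨i, by omega⟩) d → d ∉ S)

end GPath

namespace Dag

/-- `x` and `y` are d-separated by `S` in the DAG `D`: every path between `x` and `y`
is blocked by `S`. -/
def dSep (D : Dag V) (x y : V) (S : Set V) : Prop :=
  ∀ p : GPath D.Adj x y, p.Blocked D S

/-- Two DAGs on the same node set are Markov equivalent if they have exactly the same
d-separation relations. -/
def MEquiv (D D' : Dag V) : Prop :=
  ∀ (x y : V) (S : Set V), D.dSep x y S ↔ D'.dSep x y S

/-- The edge between `a` and `b` is directed `a → b` in the CPDAG of the Markov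
equivalence class of `D`: the edge `a → b` holds in every DAG Markov equivalent to `D`. -/
def CpDir (D : Dag V) (a b : V) : Prop :=
  ∀ D' : Dag V, D.MEquiv D' → D'.edge a b

/-- The edge between `a` and `b` is undirected (`a − b`) in the CPDAG: `a` and `b` are
adjacent (the CPDAG has the same adjacencies as the DAGs of the MEC) but the edge is not
directed either way in the CPDAG. -/
def CpUndir (D : Dag V) (a b : V) : Prop :=
  D.Adj a b ∧ ¬ D.CpDir a b ∧ ¬ D.CpDir b a

/-- `Pa_G(a)`: the nodes with a directed edge into `a` in the CPDAG. -/
def CpPa (D : Dag V) (a : V) : Set V := {p | D.CpDir p a}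

/-- `Ch_G(a)`: the nodes `b` with the edge directed `a → b` in the CPDAG. -/
def CpCh (D : Dag V) (a : V) : Set V := {c | D.CpDir a c}

/-- `Sib_G(a)`: the nodes joined to `a` by an undirected edge in the CPDAG. -/
def CpSib (D : Dag V) (a : V) : Set V := {s | D.CpUndir a s}

end Dag

namespace GPath

/-- `p` is a possibly directed path in the CPDAG: no edge on it is directed
backwards (as `V_i ← V_{i+1}`) in the CPDAG. -/
def CpPossiblyDirected {D : Dag V} {x y : V} (p : GPath D.Adj x y) : Prop :=
  ∀ i : Fin p.n, ¬ D.CpDir (p.f i.succ) (p.f i.castSucc)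

/-- `p` is a (fully) directed path in the CPDAG: every edge on it is directed
forwards in the CPDAG. -/
def CpDirected {D : Dag V} {x y : V} (p : GPath D.Adj x y) : Prop :=
  ∀ i : Fin p.n, D.CpDir (p.f i.castSucc) (p.f i.succ)

/-- `p` is a directed path from `x` to `y` in the DAG `D` itself. -/
def DirectedIn {D : Dag V} {x y : V} (p : GPath D.Adj x y) : Prop :=
  ∀ i : Fin p.n, D.edge (p.f i.castSucc) (p.f i.succ)

/-- `p` is unshielded: for every three consecutive nodes on it, the first and the
third are non-adjacent. -/
def Unshielded {D : Dag V} {x y : V} (p : GPath D.Adj x y) : Prop :=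
  ∀ (i : ℕ) (_ : i + 2 ≤ p.n), ¬ D.Adj (p.f ⟨i, by omega⟩) (p.f ⟨i + 2, by omega⟩)

end GPath

namespace Dag

/-- `x` is a possible ancestor of `y` in the CPDAG: there is a possibly directed path
from `x` to `y`. -/
def PossAn (D : Dag V) (x y : V) : Prop :=
  ∃ p : GPath D.Adj x y, p.CpPossiblyDirected

/-- `x` is an explicit ancestor of `y` in the CPDAG: there is a fully directed path
from `x` to `y` in the CPDAG. -/
def ExplAn (D : Dag V) (x y : V) : Prop :=
  ∃ p : GPath D.Adj x y, p.CpDirected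

/-- The CPDAG is amenable relative to `(x, y)`: every possibly directed path from
`x` to `y` starts with a directed edge out of `x`. -/
def Amenable (D : Dag V) (x y : V) : Prop :=
  ∀ p : GPath D.Adj x y, p.CpPossiblyDirected →
    ∀ _ : 0 < p.n, D.CpDir (p.f ⟨0, by omega⟩) (p.f ⟨1, by omega⟩)

/-- `S` is a valid adjustment set for `(x, y)` in the DAG `D`:
(i) no element of `S` is a descendant of any node `w ≠ x` lying on a directed path
from `x` to `y`, and (ii) every path between `x` and `y` that is not a directed path
from `x` to `y` is blocked by `S`. -/
def ValidAdjustment (D : Dag V) (x y : V) (S : Set V) : Prop :=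
  (∀ s ∈ S, ∀ w : V, w ≠ x → D.Anc x w → D.Anc w y → ¬ D.Anc w s) ∧
  (∀ p : GPath D.Adj x y, ¬ p.DirectedIn → p.Blocked D S)

/-- `Cn_D(x, y)`: the nodes `w ≠ x` lying on some directed path from `x` to `y` in `D`. -/
def Cn (D : Dag V) (x y : V) : Set V := {w | w ≠ x ∧ D.Anc x w ∧ D.Anc w y}

end Dag

/-!
Possibly directed triangles are transitive: if `a`, `b`, `c` are pairwise adjacent and neither
`b → a` nor `c → b` is an edge of the CPDAG, then `c → a` is not one either. Hence a shortest
possibly directed subsequence of the given path is unshielded.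

For the triangle, take `D₁` in the equivalence class with `a → b` and `D₂` with `b → c`, and suppose
`c → a` in every member. Covered edges of `D₁` reversed in `D₂` can be reversed one at a time
(Chickering), so we may assume that `D₁` and `D₂` agree on the edges into proper ancestors of `b`.
Then the nodes `q` with `c → q → b` in `D₁`, among them `a`, have the property that reversing all
edges from `c` to them changes neither adjacencies nor v-structures. The result is Markov equivalent
to `D₁` but contains `a → c`.

The criterion of Verma and Pearl used here (Markov equivalence means equal adjacencies and equal
v-structures) is obtained by following shortest active walks through the reversal of a covered edge.
-/

/-- `f 0, …, f n` is a walk from `x` to `y` whose steps satisfy `A` and whose consecutive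
triples satisfy `B`; the values of `f` beyond `n` are irrelevant. -/
structure IsWalk (A : V → V → Prop) (B : V → V → V → Prop) (x y : V) (f : ℕ → V) (n : ℕ) :
    Prop where
  first : f 0 = x
  last : f n = y
  step : ∀ i < n, A (f i) (f (i + 1))
  triple : ∀ i, i + 1 < n → B (f i) (f (i + 1)) (f (i + 2))

/-- A walk of minimal length among the walks with the same ends and the same constraints. -/
structure IsShortestWalk (A : V → V → Prop) (B : V → V → V → Prop) (x y : V) (f : ℕ → V) (n : ℕ) :
    Prop extends IsWalk A B x y f n where
  le_length : ∀ g m, IsWalk A B x y g m → n ≤ m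

/-- The sequence `f` with its segment `f i, …, f (i + d)` contracted to the single node `v`. -/
def contractSegment (f : ℕ → V) (i d : ℕ) (v : V) (k : ℕ) : V :=
  if k < i then f k else if k = i then v else f (k + d)

section ContractSegment

variable {f : ℕ → V} {i d k : ℕ} {v : V}

theorem contractSegment_of_lt (hk : k < i) : contractSegment f i d v k = f k :=
  if_pos hk

theorem contractSegment_self : contractSegment f i d v i = v := by
  simp only [contractSegment, lt_irrefl, if_false, if_true]

theorem contractSegment_of_gt {l : ℕ} (hk : i < k) (hl : k + d = l) :
    contractSegment f i d v k = f l := by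
  rw [contractSegment, if_neg hk.not_gt, if_neg hk.ne', hl]

theorem contractSegment_zero : contractSegment f i 0 v = Function.update f i v := by
  funext k
  rw [Function.update_apply, contractSegment]
  split_ifs <;> first | rfl | omega

end ContractSegment

section Walk

variable {A : V → V → Prop} {B : V → V → V → Prop} {x y : V} {f : ℕ → V} {n : ℕ}

theorem IsWalk.exists_shortest (h : IsWalk A B x y f n) :
    ∃ g m, IsShortestWalk A B x y g m := by
  classical
  have hex : ∃ m g, IsWalk A B x y g m := ⟨n, f, h⟩
  obtain ⟨g, hg⟩ := Nat.find_spec hex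
  exact ⟨g, _, hg, fun g' m hg' => Nat.find_min' hex ⟨g', hg'⟩⟩

theorem IsWalk.contractSegment (h : IsWalk A B x y f n) {i d : ℕ} {v : V} (hid : i + d ≤ n)
    (hfirst : i = 0 → v = x) (hlast : i + d = n → v = y)
    (hstep_left : ∀ j, j + 1 = i → A (f j) v)
    (hstep_right : i + d < n → A v (f (i + d + 1)))
    (htriple_left : ∀ j, j + 2 = i → B (f j) (f (j + 1)) v)
    (htriple_mid : ∀ j, j + 1 = i → i + d < n → B (f j) v (f (i + d + 1)))
    (htriple_right : i + d + 1 < n → B v (f (i + d + 1)) (f (i + d + 2))) :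
    IsWalk A B x y (contractSegment f i d v) (n - d) := by
  refine ⟨?_, ?_, fun k hk => ?_, fun k hk => ?_⟩
  · rcases Nat.eq_zero_or_pos i with rfl | hi
    · exact contractSegment_self.trans (hfirst rfl)
    · exact (contractSegment_of_lt hi).trans h.first
  · rcases hid.eq_or_lt with hid | hid
    · rw [show n - d = i by omega, contractSegment_self, hlast hid]
    · rw [contractSegment_of_gt (l := n) (by omega) (by omega), h.last]
  · rcases lt_trichotomy (k + 1) i with hki | hki | hki
    · rw [contractSegment_of_lt (by omega), contractSegment_of_lt hki]
      exact h.step k (by omega)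
    · rw [contractSegment_of_lt (by omega), hki, contractSegment_self]
      exact hstep_left k hki
    · rw [contractSegment_of_gt hki (l := k + d + 1) (by omega)]
      rcases (Nat.lt_succ_iff.1 hki).eq_or_lt with rfl | hki
      · rw [contractSegment_self]
        exact hstep_right (by omega)
      · rw [contractSegment_of_gt hki rfl]
        exact h.step _ (by omega)
  · rcases lt_trichotomy (k + 1) i with hki | hki | hki
    · rw [contractSegment_of_lt (by omega), contractSegment_of_lt hki]
      rcases (Nat.succ_le_iff.2 hki).eq_or_lt with hki | hki
      · rw [show k + 2 = i from hki, contractSegment_self]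
        exact htriple_left k hki
      · rw [contractSegment_of_lt hki]
        exact h.triple k (by omega)
    · rw [contractSegment_of_lt (by omega), hki, contractSegment_self,
        contractSegment_of_gt (l := i + d + 1) (by omega) (by omega)]
      exact htriple_mid k hki (by omega)
    · rw [contractSegment_of_gt hki (l := k + d + 1) (by omega),
        contractSegment_of_gt (k := k + 2) (l := k + d + 2) (by omega) (by omega)]
      rcases (Nat.lt_succ_iff.1 hki).eq_or_lt with rfl | hki
      · rw [contractSegment_self]
        exact htriple_right (by omega)
      · rw [contractSegment_of_gt hki rfl]
        exact h.triple _ (by omega)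

theorem IsWalk.update_interior (h : IsWalk A B x y f n) {i : ℕ} {v : V} (hi : i + 2 ≤ n)
    (hstep_left : A (f i) v) (hstep_right : A v (f (i + 2)))
    (htriple_left : ∀ j, j + 1 = i → B (f j) (f i) v) (htriple_mid : B (f i) v (f (i + 2)))
    (htriple_right : B (f (i + 1)) (f (i + 2)) (f (i + 3)) → B v (f (i + 2)) (f (i + 3))) :
    IsWalk A B x y (Function.update f (i + 1) v) n := by
  rw [← contractSegment_zero]
  exact h.contractSegment (by omega) (by omega)
    (by omega) (fun j hj => by rwa [Nat.succ_injective hj]) (fun _ => hstep_right)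
    (fun j hj => by
      rw [Nat.succ_injective hj]
      exact htriple_left j (Nat.succ_injective hj))
    (fun j hj _ => by rwa [Nat.succ_injective hj])
    (fun hn => htriple_right (h.triple (i + 1) hn))

theorem IsShortestWalk.eq_of_apply_eq (h : IsShortestWalk A B x y f n) {i j : ℕ} (hij : i ≤ j)
    (hj : j ≤ n) (hf : f i = f j)
    (hB : ∀ k, k + 1 = i → j < n → B (f k) (f i) (f (j + 1))) : i = j := by
  obtain ⟨d, rfl⟩ := Nat.exists_eq_add_of_le hij
  have hle := h.le_length _ _ <| h.contractSegment (v := f i) hj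
    (fun hi => by rw [hi, h.first]) (fun hd => by rw [hf, hd, h.last])
    (fun k hk => hk ▸ h.step k (by omega)) (fun hd => hf ▸ h.step _ hd)
    (fun k hk => hk ▸ h.triple k (by omega)) hB (fun hd => hf ▸ h.triple _ hd)
  omega

theorem IsShortestWalk.false_of_shortcut (h : IsShortestWalk A B x y f n) {i : ℕ}
    (hi : i + 2 ≤ n) (hA : A (f i) (f (i + 2)))
    (hleft : ∀ j, j + 1 = i → B (f j) (f i) (f (i + 1)) → B (f j) (f i) (f (i + 2)))
    (hright : B (f (i + 1)) (f (i + 2)) (f (i + 3)) → B (f i) (f (i + 2)) (f (i + 3))) :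
    False := by
  have hle := h.le_length _ _ <| h.contractSegment (i := i) (d := 1) (v := f i) (by omega)
    (fun hi => by rw [hi, h.first]) (fun hd => by omega)
    (fun k hk => hk ▸ h.step k (by omega)) (fun _ => hA)
    (fun k hk => hk ▸ h.triple k (by omega))
    (fun k hk _ => hleft k hk (hk ▸ h.triple k (by omega)))
    (fun hd => hright (h.triple _ hd))
  omega

theorem IsWalk.reverse (hA : ∀ u v, A u v → A v u) (hB : ∀ u v w, B u v w → B w v u)
    (h : IsWalk A B x y f n) : IsWalk A B y x (fun k => f (n - k)) n where
  first := h.last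
  last := by simpa only [Nat.sub_self] using h.first
  step i hi := by
    have hstep := hA _ _ (h.step (n - (i + 1)) (by omega))
    rwa [show n - (i + 1) + 1 = n - i by omega] at hstep
  triple i hi := by
    have htriple := hB _ _ _ (h.triple (n - (i + 2)) (by omega))
    rwa [show n - (i + 2) + 1 = n - (i + 1) by omega,
      show n - (i + 2) + 2 = n - i by omega] at htriple

theorem IsShortestWalk.reverse (hA : ∀ u v, A u v → A v u) (hB : ∀ u v w, B u v w → B w v u)
    (h : IsShortestWalk A B x y f n) : IsShortestWalk A B y x (fun k => f (n - k)) n where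
  toIsWalk := h.toIsWalk.reverse hA hB
  le_length _ m hg := h.le_length _ m (hg.reverse hA hB)

end Walk

/-! ### d-connection by walks -/

namespace GPath

variable {A : V → V → Prop} {B : V → V → V → Prop} {x y : V}

/-- The node sequence of a path as a total function on `ℕ`, constant beyond the last node. -/
def seq (p : GPath A x y) (i : ℕ) : V := p.f ⟨min i p.n, by omega⟩

theorem seq_of_le (p : GPath A x y) {i : ℕ} (hi : i ≤ p.n) : p.seq i = p.f ⟨i, by omega⟩ := by
  simp only [seq, min_eq_left hi]

theorem isWalk_seq (p : GPath A x y)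
    (hB : ∀ i, i + 1 < p.n → B (p.seq i) (p.seq (i + 1)) (p.seq (i + 2))) :
    IsWalk A B x y p.seq p.n where
  first := (p.seq_of_le p.n.zero_le).trans p.first
  last := (p.seq_of_le le_rfl).trans p.last
  step i hi := by
    rw [p.seq_of_le hi.le, p.seq_of_le hi]
    exact p.adj ⟨i, hi⟩
  triple := hB

end GPath

/-- A walk without repeated nodes, as a path. -/
def IsWalk.toGPath {A : V → V → Prop} {B : V → V → V → Prop} {x y : V} {f : ℕ → V} {n : ℕ}
    (h : IsWalk A B x y f n) (hf : Set.InjOn f (Set.Iic n)) : GPath A x y where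
  n := n
  f i := f i
  inj i j hij := Fin.ext (hf i.is_le j.is_le hij)
  first := h.first
  last := h.last
  adj i := h.step i i.2

theorem IsWalk.toGPath_seq {A : V → V → Prop} {B : V → V → V → Prop} {x y : V} {f : ℕ → V} {n : ℕ}
    (h : IsWalk A B x y f n) (hf : Set.InjOn f (Set.Iic n)) {i : ℕ} (hi : i ≤ n) :
    (h.toGPath hf).seq i = f i :=
  (h.toGPath hf).seq_of_le hi

namespace Dag

variable {D : Dag V} {a b c u v w z : V} {S : Set V}

theorem edge_asymm (h : D.edge a b) : ¬ D.edge b a := fun h' => D.acyclic a b h (.single h')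

theorem edge_ne (h : D.edge a b) : a ≠ b := by
  rintro rfl
  exact edge_asymm h h

theorem not_edge_of_edge_of_edge (hab : D.edge a b) (hbc : D.edge b c) : ¬ D.edge c a :=
  fun hca => D.acyclic a b hab (.head hbc (.single hca))

theorem Adj.symm (h : D.Adj a b) : D.Adj b a := Or.symm h

theorem Adj.edge_of_not_edge (h : D.Adj a b) (h' : ¬ D.edge b a) : D.edge a b :=
  h.resolve_right h'

theorem Adj.ne (h : D.Adj a b) : a ≠ b :=
  h.elim edge_ne fun h => (edge_ne h).symm

theorem transGen_irrefl (D : Dag V) (a : V) : ¬ Relation.TransGen D.edge a a := fun h =>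
  let ⟨b, hab, hba⟩ := Relation.TransGen.head'_iff.1 h
  D.acyclic a b hab hba

/-- The ancestors of the members of `S`. -/
def ancestors (D : Dag V) (S : Set V) : Set V := {v | ∃ s ∈ S, D.Anc v s}

theorem Anc.mem_ancestors (h : D.Anc u v) (hv : v ∈ D.ancestors S) : u ∈ D.ancestors S :=
  let ⟨s, hs, hvs⟩ := hv
  ⟨s, hs, h.trans hvs⟩

theorem not_mem_ancestors_pa (D : Dag V) (x : V) : x ∉ D.ancestors (D.Pa x) :=
  fun ⟨s, hs, hxs⟩ => D.acyclic s x hs hxs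

/-- The middle node of the consecutive nodes `u`, `w`, `v` of a walk does not block it. -/
def Active (D : Dag V) (S : Set V) (u w v : V) : Prop :=
  (D.edge u w ∧ D.edge v w → w ∈ D.ancestors S) ∧ (¬ (D.edge u w ∧ D.edge v w) → w ∉ S)

theorem Active.symm (h : D.Active S u w v) : D.Active S v w u := by
  rwa [Active, and_comm (a := D.edge v w)]

theorem Active.congr_left (h : D.Active S u w v) (huz : D.edge u w ↔ D.edge z w) :
    D.Active S z w v := by
  rwa [Active, ← huz]

theorem Active.congr_right (h : D.Active S u w v) (hvz : D.edge v w ↔ D.edge z w) :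
    D.Active S u w z := by
  rwa [Active, ← hvz]

/-- A walk on which no non-endpoint node blocks. -/
abbrev IsActiveWalk (D : Dag V) (S : Set V) : V → V → (ℕ → V) → ℕ → Prop :=
  IsWalk D.Adj (D.Active S)

/-- An active walk that is shortest among the active walks with the same ends. -/
abbrev IsShortestActiveWalk (D : Dag V) (S : Set V) : V → V → (ℕ → V) → ℕ → Prop :=
  IsShortestWalk D.Adj (D.Active S)

end Dag

section ActiveWalk

variable {D : Dag V} {S : Set V} {x y : V} {f : ℕ → V} {n : ℕ}

theorem GPath.not_blocked_iff {A : V → V → Prop} (p : GPath A x y) :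
    ¬ p.Blocked D S ↔
      ∀ i, i + 1 < p.n → D.Active S (p.seq i) (p.seq (i + 1)) (p.seq (i + 2)) := by
  have node_iff : ∀ i (hi : i + 1 < p.n),
      D.Active S (p.seq i) (p.seq (i + 1)) (p.seq (i + 2)) ↔
        ¬ ((¬ p.ColliderAt D.edge (i + 1) ∧ p.f ⟨i + 1, by omega⟩ ∈ S) ∨
          (p.ColliderAt D.edge (i + 1) ∧ ∀ d, D.Anc (p.f ⟨i + 1, by omega⟩) d → d ∉ S)) := by
    intro i hi
    have hcollider : p.ColliderAt D.edge (i + 1) ↔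
        D.edge (p.seq i) (p.seq (i + 1)) ∧ D.edge (p.seq (i + 2)) (p.seq (i + 1)) := by
      rw [p.seq_of_le (i := i) (by omega), p.seq_of_le hi.le, p.seq_of_le (i := i + 2) hi]
      exact ⟨fun ⟨_, _, h⟩ => h, fun h => ⟨i.succ_pos, hi, h⟩⟩
    have hancestors : (∀ d, D.Anc (p.seq (i + 1)) d → d ∉ S) ↔
        p.seq (i + 1) ∉ D.ancestors S :=
      ⟨fun h ⟨s, hs, hd⟩ => h s hd hs, fun h d hd hs => h ⟨d, hs, hd⟩⟩
    rw [hcollider, ← p.seq_of_le hi.le, hancestors, Dag.Active]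
    tauto
  constructor
  · exact fun h i hi => (node_iff i hi).2 fun h' => h ⟨i + 1, i.succ_pos, hi, h'⟩
  · rintro h ⟨_ | i, hpos, hi, h'⟩
    · exact absurd hpos (lt_irrefl 0)
    · exact (node_iff i hi).1 (h i hi) h'

/-- A walk leaving a node forwards stays directed until it meets a collider, which is active. -/
theorem Dag.IsActiveWalk.mem_ancestors_or_directed (h : D.IsActiveWalk S x y f n) {i : ℕ}
    (hi : D.edge (f i) (f (i + 1))) : ∀ d, i + d < n → f i ∈ D.ancestors S ∨
      (D.Anc (f i) (f (i + d)) ∧ D.edge (f (i + d)) (f (i + d + 1)))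
  | 0, _ => .inr ⟨.refl, hi⟩
  | d + 1, hd => by
    rcases h.mem_ancestors_or_directed hi d (by omega) with hS | ⟨hanc, hedge⟩
    · exact .inl hS
    have hanc' : D.Anc (f i) (f (i + (d + 1))) := hanc.tail hedge
    rcases h.step (i + (d + 1)) hd with hfwd | hback
    · exact .inr ⟨hanc', hfwd⟩
    · exact .inl (hanc'.mem_ancestors ((h.triple (i + d) hd).1 ⟨hedge, hback⟩))

theorem Dag.IsActiveWalk.active_of_apply_eq (h : D.IsActiveWalk S x y f n) {k j : ℕ}
    (hkj : k + 1 ≤ j) (hj : j < n) (hf : f (k + 1) = f j) :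
    D.Active S (f k) (f (k + 1)) (f (j + 1)) := by
  obtain ⟨d, rfl⟩ := Nat.exists_eq_add_of_le hkj
  rcases d with _ | d
  · exact h.triple k hj
  have hk := h.triple k (by omega)
  have hlast := h.triple (k + 1 + d) hj
  rw [show k + 1 + d + 1 = k + 1 + (d + 1) from rfl, ← hf] at hlast
  refine ⟨fun hcollider => ?_, fun hcollider => ?_⟩
  · rcases h.step (k + 1) (by omega) with hfwd | hback
    · refine (h.mem_ancestors_or_directed hfwd d (by omega)).resolve_right fun hdir => ?_
      refine D.acyclic _ _ hdir.2 ?_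
      rw [show k + 1 + d + 1 = k + 1 + (d + 1) from rfl, ← hf]
      exact hdir.1
    · exact hk.1 ⟨hcollider.1, hback⟩
  · by_cases hin : D.edge (f k) (f (k + 1))
    · exact hlast.2 fun hc => hcollider ⟨hin, hc.2⟩
    · exact hk.2 fun hc => hin hc.1

theorem Dag.IsShortestActiveWalk.injOn (h : D.IsShortestActiveWalk S x y f n) :
    Set.InjOn f (Set.Iic n) := by
  have eq_of_le : ∀ i j, i ≤ j → j ≤ n → f i = f j → i = j := by
    refine fun i j hij hj hf => h.eq_of_apply_eq hij hj hf ?_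
    rintro k rfl hjn
    exact Dag.IsActiveWalk.active_of_apply_eq h.toIsWalk hij hjn hf
  intro i hi j hj hf
  rcases le_total i j with hij | hij
  · exact eq_of_le i j hij hj hf
  · exact (eq_of_le j i hij hi hf.symm).symm

theorem Dag.IsShortestActiveWalk.apply_ne (h : D.IsShortestActiveWalk S x y f n) {i j : ℕ}
    (hij : i < j) (hj : j ≤ n) : f i ≠ f j :=
  fun hf => hij.ne (h.injOn (hij.le.trans hj) hj hf)

theorem Dag.IsShortestActiveWalk.reverse (h : D.IsShortestActiveWalk S x y f n) :
    D.IsShortestActiveWalk S y x (fun k => f (n - k)) n :=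
  IsShortestWalk.reverse (fun _ _ => Adj.symm) (fun _ _ _ => Active.symm) h

theorem Dag.not_dSep_iff_exists_isActiveWalk :
    ¬ D.dSep x y S ↔ ∃ f n, D.IsActiveWalk S x y f n := by
  constructor
  · intro h
    obtain ⟨p, hp⟩ := not_forall.1 h
    exact ⟨p.seq, p.n, p.isWalk_seq (p.not_blocked_iff.1 hp)⟩
  · rintro ⟨f₀, n₀, h₀⟩ hsep
    obtain ⟨f, n, h⟩ := h₀.exists_shortest
    refine (h.toGPath (IsShortestActiveWalk.injOn h)).not_blocked_iff.2 (fun i hi => ?_) (hsep _)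
    rw [h.toGPath_seq _ (i := i) (by exact (Nat.lt_of_succ_lt hi).le),
      h.toGPath_seq _ (i := i + 1) hi.le, h.toGPath_seq _ (i := i + 2) hi]
    exact h.triple i hi

end ActiveWalk

/-! ### Markov equivalent DAGs have the same v-structures -/

/-- Two DAGs have the same adjacencies and the same v-structures. -/
structure StructEquiv (D D' : Dag V) : Prop where
  adj_iff : ∀ a b, D.Adj a b ↔ D'.Adj a b
  collider_iff : ∀ a b c, a ≠ b → ¬ D.Adj a b →
    (D.edge a c ∧ D.edge b c ↔ D'.edge a c ∧ D'.edge b c)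

namespace Dag

variable {D D' D₁ : Dag V} {a b c x y z : V} {S : Set V}

theorem not_dSep_of_adj (h : D.Adj x y) : ¬ D.dSep x y S := by
  refine not_dSep_iff_exists_isActiveWalk.2 ⟨fun i => if i = 0 then x else y, 1, rfl, rfl, ?_, ?_⟩
  · intro i hi
    obtain rfl : i = 0 := by omega
    exact h
  · intro i hi
    omega

theorem not_dSep_of_active (hxz : D.Adj x z) (hzy : D.Adj z y) (h : D.Active S x z y) :
    ¬ D.dSep x y S := by
  refine not_dSep_iff_exists_isActiveWalk.2
    ⟨fun i => if i = 0 then x else if i = 1 then z else y, 2, rfl, rfl, ?_, ?_⟩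
  · intro i hi
    obtain rfl | rfl : i = 0 ∨ i = 1 := by omega
    exacts [hxz, hzy]
  · intro i hi
    obtain rfl : i = 0 := by omega
    exact h

theorem dSep_pa (hxy : x ≠ y) (hadj : ¬ D.Adj x y) (hanc : ¬ D.Anc x y) : D.dSep x y (D.Pa x) := by
  by_contra h
  obtain ⟨f, n, h⟩ := not_dSep_iff_exists_isActiveWalk.1 h
  obtain rfl := h.first
  obtain rfl := h.last
  rcases n with _ | n
  · exact hxy rfl
  rcases h.step 0 n.succ_pos with hout | hin
  · rcases h.mem_ancestors_or_directed hout n (by omega) with hS | ⟨hanc', hedge⟩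
    · exact D.not_mem_ancestors_pa _ hS
    · rw [Nat.zero_add] at hanc' hedge
      exact hanc (hanc'.tail hedge)
  · rcases n with _ | n
    · exact hadj (.inr hin)
    · exact (h.triple 0 (by omega)).2 (fun hc => edge_asymm hin hc.1) hin

theorem exists_dSep_or (hxy : x ≠ y) (hadj : ¬ D.Adj x y) :
    ∃ S, D.dSep x y S ∨ D.dSep y x S := by
  by_cases hanc : D.Anc x y
  · refine ⟨D.Pa y, .inr (dSep_pa hxy.symm (fun h => hadj h.symm) fun hanc' => ?_)⟩
    rcases Relation.ReflTransGen.cases_head hanc with rfl | ⟨z, hxz, hzy⟩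
    · exact hxy rfl
    · exact D.acyclic x z hxz (hzy.trans hanc')
  · exact ⟨D.Pa x, .inl (dSep_pa hxy hadj hanc)⟩

theorem MEquiv.symm (h : D.MEquiv D') : D'.MEquiv D := fun x y S => (h x y S).symm

theorem MEquiv.trans (h : D.MEquiv D') (h' : D'.MEquiv D₁) : D.MEquiv D₁ :=
  fun x y S => (h x y S).trans (h' x y S)

theorem MEquiv.adj_imp (h : D.MEquiv D') (hadj : D.Adj a b) : D'.Adj a b := by
  by_contra hadj'
  obtain ⟨S, hS | hS⟩ := exists_dSep_or hadj.ne hadj'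
  · exact not_dSep_of_adj hadj ((h _ _ _).2 hS)
  · exact not_dSep_of_adj hadj.symm ((h _ _ _).2 hS)

theorem MEquiv.collider_imp_of_dSep (h : D.MEquiv D') (hsep : D.dSep a b S) (hac : D.edge a c)
    (hbc : D.edge b c) : D'.edge a c ∧ D'.edge b c := by
  by_contra hcollider
  have hc : c ∉ S := fun hc =>
    not_dSep_of_active (.inl hac) (.inr hbc) ⟨fun _ => ⟨c, hc, .refl⟩, fun h => (h ⟨hac, hbc⟩).elim⟩
      hsep
  exact not_dSep_of_active (h.adj_imp (.inl hac)) (h.adj_imp (.inr hbc))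
    ⟨fun h => (hcollider h).elim, fun _ => hc⟩ ((h a b S).1 hsep)

theorem MEquiv.collider_imp (h : D.MEquiv D') (hab : a ≠ b) (hadj : ¬ D.Adj a b)
    (hc : D.edge a c ∧ D.edge b c) : D'.edge a c ∧ D'.edge b c := by
  obtain ⟨S, hS | hS⟩ := exists_dSep_or hab hadj
  · exact h.collider_imp_of_dSep hS hc.1 hc.2
  · exact (h.collider_imp_of_dSep hS hc.2 hc.1).symm

theorem MEquiv.structEquiv (h : D.MEquiv D') : StructEquiv D D' where
  adj_iff _ _ := ⟨h.adj_imp, h.symm.adj_imp⟩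
  collider_iff _ _ _ hab hadj :=
    ⟨h.collider_imp hab hadj, h.symm.collider_imp hab fun h' => hadj (h.symm.adj_imp h')⟩

end Dag

namespace StructEquiv

variable {D D' D₁ : Dag V} {u v w : V}

theorem symm (h : StructEquiv D D') : StructEquiv D' D where
  adj_iff a b := (h.adj_iff a b).symm
  collider_iff a b c hab hadj :=
    (h.collider_iff a b c hab fun h' => hadj ((h.adj_iff a b).1 h')).symm

theorem trans (h : StructEquiv D D') (h' : StructEquiv D' D₁) : StructEquiv D D₁ where
  adj_iff a b := (h.adj_iff a b).trans (h'.adj_iff a b)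
  collider_iff a b c hab hadj := (h.collider_iff a b c hab hadj).trans
    (h'.collider_iff a b c hab fun h'' => hadj ((h.adj_iff a b).2 h''))

theorem edge_or (h : StructEquiv D D') (he : D.edge u v) : D'.edge u v ∨ D'.edge v u :=
  (h.adj_iff u v).1 (.inl he)

theorem adj_of_reversed (h : StructEquiv D D') (huw : D.edge u w) (hvw : D.edge v w)
    (hwv : D'.edge w v) (huv : u ≠ v) : D.Adj u v := by
  by_contra hadj
  exact Dag.edge_asymm hwv ((h.collider_iff u v w huv hadj).1 ⟨huw, hvw⟩).2

end StructEquiv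

/-! ### Reversing covered edges -/

/-- `Q` is a set of children of `c` whose edges from `c` can all be reversed without changing
adjacencies or v-structures. For `Q = {b}` this says that `c → b` is a covered edge. -/
structure Dag.CoveredChildren (D : Dag V) (c : V) (Q : Set V) : Prop where
  child : ∀ q ∈ Q, D.edge c q
  edge_of_edge : ∀ u, D.edge u c → ∀ q ∈ Q, D.edge u q
  source : ∀ u, ∀ q ∈ Q, D.edge u q → u = c ∨ D.edge u c ∨ u ∈ Q
  adj : Q.Pairwise D.Adj

/-- The edge relation of `D` after the edges from `c` to `Q` have been reversed. -/
def Dag.reverseEdge (D : Dag V) (c : V) (Q : Set V) (u v : V) : Prop :=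
  (D.edge u v ∧ ¬ (u = c ∧ v ∈ Q)) ∨ (v = c ∧ u ∈ Q)

namespace Dag.CoveredChildren

open Relation

variable {D : Dag V} {c : V} {Q : Set V}

theorem not_mem_of_reachable (h : D.CoveredChildren c Q) {w : V}
    (hw : ReflTransGen (D.reverseEdge c Q) c w) : w ∉ Q ∧ D.Anc c w := by
  induction hw with
  | refl => exact ⟨fun hc => edge_ne (h.child c hc) rfl, .refl⟩
  | @tail b w _ hbw ih =>
    rcases hbw with ⟨hbw, hkept⟩ | ⟨_, hb⟩
    · refine ⟨fun hw => ?_, ih.2.tail hbw⟩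
      rcases h.source b w hw hbw with hbc | hbc | hb
      · exact hkept ⟨hbc, hw⟩
      · exact D.acyclic b c hbc ih.2
      · exact ih.1 hb
    · exact absurd hb ih.1

theorem anc_or_through {u v : V} (hvu : ReflTransGen (D.reverseEdge c Q) v u) :
    D.Anc v u ∨ ∃ q ∈ Q, ReflTransGen (D.reverseEdge c Q) v q ∧
      ReflTransGen (D.reverseEdge c Q) c u := by
  induction hvu with
  | refl => exact .inl .refl
  | @tail w u hvw hwu ih =>
    rcases ih with hanc | ⟨q, hq, hvq, hcw⟩
    · rcases hwu with ⟨hwu, _⟩ | ⟨rfl, hw⟩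
      · exact .inl (hanc.tail hwu)
      · exact .inr ⟨w, hw, hvw, .refl⟩
    · exact .inr ⟨q, hq, hvq, hcw.tail hwu⟩

/-- The DAG obtained by reversing the edges from `c` to its covered children `Q`. -/
def reverse (h : D.CoveredChildren c Q) : Dag V where
  edge := D.reverseEdge c Q
  acyclic := by
    rintro a b hab hba
    rcases hab with ⟨hab, hkept⟩ | ⟨rfl, ha⟩
    · rcases anc_or_through hba with hanc | ⟨q, hq, hbq, hca⟩
      · exact D.acyclic a b hab hanc
      · have hcq := (hca.tail (.inl ⟨hab, hkept⟩)).trans hbq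
        exact (h.not_mem_of_reachable hcq).1 hq
    · exact (h.not_mem_of_reachable hba).1 ha

theorem reverse_edge_of_mem (h : D.CoveredChildren c Q) {q : V} (hq : q ∈ Q) :
    h.reverse.edge q c :=
  .inr ⟨rfl, hq⟩

theorem reverse_adj_iff (h : D.CoveredChildren c Q) (u v : V) :
    D.Adj u v ↔ h.reverse.Adj u v := by
  have adj_of_edge : ∀ u v, D.edge u v → h.reverse.Adj u v := fun u v huv => by
    by_cases hrev : u = c ∧ v ∈ Q
    · exact .inr (.inr hrev)
    · exact .inl (.inl ⟨huv, hrev⟩)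
  have adj_of_reverse_edge : ∀ u v, h.reverse.edge u v → D.Adj u v := by
    rintro u v (⟨huv, _⟩ | ⟨rfl, hu⟩)
    · exact .inl huv
    · exact .inr (h.child u hu)
  exact ⟨fun h' => h'.elim (adj_of_edge u v) fun h' => (adj_of_edge v u h').symm,
    fun h' => h'.elim (adj_of_reverse_edge u v) fun h' => (adj_of_reverse_edge v u h').symm⟩

theorem structEquiv_reverse (h : D.CoveredChildren c Q) : StructEquiv D h.reverse where
  adj_iff := h.reverse_adj_iff
  collider_iff u v w huv hadj := by
    have kept : ∀ u v, u ≠ v → ¬ D.Adj u v → D.edge u w → D.edge v w → h.reverse.edge u w := by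
      refine fun u v huv hadj huw hvw => .inl ⟨huw, ?_⟩
      rintro ⟨rfl, hw⟩
      rcases h.source v w hw hvw with rfl | hvu | hv
      · exact huv rfl
      · exact hadj (.inr hvu)
      · exact hadj (.inl (h.child v hv))
    have unreversed : ∀ u v, u ≠ v → ¬ D.Adj u v → h.reverse.edge u w → h.reverse.edge v w →
        D.edge u w := by
      rintro u v huv hadj (⟨huw, _⟩ | ⟨rfl, hu⟩) hvw
      · exact huw
      rcases hvw with ⟨hvw, _⟩ | ⟨_, hv⟩
      · exact absurd (.inr (h.edge_of_edge v hvw u hu)) hadj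
      · exact absurd (h.adj hu hv huv) hadj
    have hadj' : ¬ D.Adj v u := fun h' => hadj h'.symm
    exact ⟨fun ⟨hu, hv⟩ => ⟨kept u v huv hadj hu hv, kept v u huv.symm hadj' hv hu⟩,
      fun ⟨hu, hv⟩ => ⟨unreversed u v huv hadj hu hv, unreversed v u huv.symm hadj' hv hu⟩⟩

end Dag.CoveredChildren

/-- `D'` arises from `D` by reversing the covered edge `a → b`. Unlike `CoveredChildren.reverse`,
this description is symmetric in the two DAGs. -/
structure Dag.IsCoveredReversal (D D' : Dag V) (a b : V) : Prop where
  edge : D.edge a b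
  edge_reversed : D'.edge b a
  parent_iff : ∀ u, u ≠ a → (D.edge u b ↔ D.edge u a)
  edge_iff : ∀ u v, ¬ (u = a ∧ v = b) → ¬ (u = b ∧ v = a) → (D.edge u v ↔ D'.edge u v)

theorem Dag.CoveredChildren.isCoveredReversal {D : Dag V} {a b : V}
    (h : D.CoveredChildren a {b}) : D.IsCoveredReversal h.reverse a b where
  edge := h.child b rfl
  edge_reversed := h.reverse_edge_of_mem rfl
  parent_iff u hu := by
    refine ⟨fun hub => ?_, fun hua => h.edge_of_edge u hua b rfl⟩
    rcases h.source u b rfl hub with rfl | hua | rfl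
    · exact absurd rfl hu
    · exact hua
    · exact absurd rfl (edge_ne hub)
  edge_iff u v hab hba :=
    ⟨fun huv => .inl ⟨huv, hab⟩, fun h' => h'.elim And.left fun h' => absurd h'.symm hba⟩

namespace Dag.IsCoveredReversal

variable {D D' : Dag V} {a b u v x y : V} {S : Set V} {f : ℕ → V} {n i : ℕ}

theorem symm (h : D.IsCoveredReversal D' a b) : D'.IsCoveredReversal D b a where
  edge := h.edge_reversed
  edge_reversed := h.edge
  parent_iff u hub := by
    rcases eq_or_ne u a with rfl | hua
    · exact iff_of_false (fun h' => edge_ne h' rfl) (edge_asymm h.edge_reversed)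
    · rw [← h.edge_iff u a (fun h' => hua h'.1) (fun h' => hub h'.1),
        ← h.edge_iff u b (fun h' => hua h'.1) (fun h' => hub h'.1), h.parent_iff u hua]
  edge_iff u v hba hab := (h.edge_iff u v hab hba).symm

theorem adj_imp (h : D.IsCoveredReversal D' a b) (huv : D.Adj u v) : D'.Adj u v := by
  by_cases hab : u = a ∧ v = b
  · exact .inr (hab.1 ▸ hab.2 ▸ h.edge_reversed)
  by_cases hba : u = b ∧ v = a
  · exact .inl (hba.1 ▸ hba.2 ▸ h.edge_reversed)
  exact huv.imp (h.edge_iff u v hab hba).1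
    (h.edge_iff v u (fun h' => hba h'.symm) (fun h' => hab h'.symm)).1

theorem edge_tail_of_edge_head (h : D.IsCoveredReversal D' a b) (hub : D.edge u b) (hua : u ≠ a) :
    D.edge u a :=
  (h.parent_iff u hua).1 hub

theorem edge_head_of_edge_tail (h : D.IsCoveredReversal D' a b) (hua : D.edge u a) : D.edge u b :=
  (h.parent_iff u (edge_ne hua)).2 hua

/-- Only `a` can lose ancestorship: an ancestor of `a` can bypass it through `b`. -/
theorem mem_ancestors_or (h : D.IsCoveredReversal D' a b) (hv : v ∈ D.ancestors S) :
    v ∈ D'.ancestors S ∨ (v = a ∧ b ∈ D.ancestors S ∧ b ∈ D'.ancestors S) := by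
  obtain ⟨s, hs, hvs⟩ := hv
  induction hvs using Relation.ReflTransGen.head_induction_on with
  | refl => exact .inl ⟨s, hs, .refl⟩
  | @head v w hvw hws ih =>
    have edge_of_ne : ∀ t, D.edge v t → ¬ (v = a ∧ t = b) → D'.edge v t := fun t hvt hne =>
      (h.edge_iff v t hne fun ⟨hvb, hta⟩ => edge_asymm h.edge (hvb ▸ hta ▸ hvt)).1 hvt
    rcases ih with hw | ⟨rfl, _, hb⟩
    · by_cases hab : v = a ∧ w = b
      · exact .inr ⟨hab.1, hab.2 ▸ ⟨s, hs, hws⟩, hab.2 ▸ hw⟩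
      · exact .inl (Anc.mem_ancestors (.single (edge_of_ne w hvw hab)) hw)
    · have hvb := edge_of_ne b (h.edge_head_of_edge_tail hvw) fun h' => edge_ne hvw h'.1
      exact .inl (Anc.mem_ancestors (.single hvb) hb)

/-- Otherwise the shortest walk could bypass `a`. -/
theorem not_edge_of_head_tail (h : D.IsCoveredReversal D' a b)
    (hf : D.IsShortestActiveWalk S x y f n) (hi : i + 2 ≤ n) (hb : f i = b)
    (ha : f (i + 1) = a) : ¬ D.edge (f (i + 2)) a := by
  intro hwa
  have hwb := h.edge_head_of_edge_tail hwa
  refine hf.false_of_shortcut hi (.inr (hb ▸ hwb)) (fun j _ hj => ?_) fun hj => ?_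
  · exact hj.congr_right (iff_of_true (ha ▸ hb ▸ h.edge) (hb ▸ hwb))
  · exact hj.congr_left (iff_of_false (ha ▸ edge_asymm hwa) (hb ▸ edge_asymm hwb))

theorem not_edge_of_tail_head (h : D.IsCoveredReversal D' a b)
    (hf : D.IsShortestActiveWalk S x y f n) (hi : i + 2 ≤ n) (ha : f (i + 1) = a)
    (hb : f (i + 2) = b) : ¬ D.edge (f i) a := by
  have hrev := h.not_edge_of_head_tail hf.reverse (i := n - (i + 2)) (by omega)
    (by rwa [show n - (n - (i + 2)) = i + 2 by omega])
    (by rwa [show n - (n - (i + 2) + 1) = i + 1 by omega])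
  rwa [show n - (n - (i + 2) + 2) = i by omega] at hrev

theorem not_edge_right (h : D.IsCoveredReversal D' a b)
    (hf : D.IsShortestActiveWalk S x y f n) (hi : i + 2 ≤ n)
    (hab : (f i = a ∧ f (i + 1) = b) ∨ (f i = b ∧ f (i + 1) = a)) :
    ¬ D.edge (f (i + 2)) (f (i + 1)) := by
  rcases hab with ⟨ha, hb⟩ | ⟨hb, ha⟩
  · intro hwb
    have hwa : D.edge (f (i + 2)) a :=
      h.edge_tail_of_edge_head (hb ▸ hwb) (ha ▸ (hf.apply_ne (by omega) hi).symm)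
    refine hf.false_of_shortcut hi (.inr (ha ▸ hwa)) (fun j hj hact => ?_) fun hact => ?_
    · subst hj
      have hua := h.not_edge_of_tail_head hf (by omega) ha hb
      exact ⟨fun hc => absurd (ha ▸ hc.1) hua, fun _ => hact.2 fun hc => hua (ha ▸ hc.1)⟩
    · exact hact.congr_left (iff_of_false (edge_asymm hwb) (ha ▸ edge_asymm hwa))
  · exact ha ▸ h.not_edge_of_head_tail hf hi hb ha

theorem not_edge_left (h : D.IsCoveredReversal D' a b)
    (hf : D.IsShortestActiveWalk S x y f n) (hi : i + 2 ≤ n)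
    (hab : (f (i + 2) = a ∧ f (i + 1) = b) ∨ (f (i + 2) = b ∧ f (i + 1) = a)) :
    ¬ D.edge (f i) (f (i + 1)) := by
  have hrev := h.not_edge_right hf.reverse (i := n - (i + 2)) (by omega)
  rw [show n - (n - (i + 2)) = i + 2 by omega, show n - (n - (i + 2) + 1) = i + 1 by omega,
    show n - (n - (i + 2) + 2) = i by omega] at hrev
  exact hrev hab

theorem collider_iff (h : D.IsCoveredReversal D' a b)
    (hf : D.IsShortestActiveWalk S x y f n) (hi : i + 2 ≤ n) :
    (D.edge (f i) (f (i + 1)) ∧ D.edge (f (i + 2)) (f (i + 1))) ↔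
      (D'.edge (f i) (f (i + 1)) ∧ D'.edge (f (i + 2)) (f (i + 1))) := by
  have reversed_iff : ∀ u v, (D.edge u v ↔ D'.edge u v) ∨ (u = a ∧ v = b) ∨ (u = b ∧ v = a) := by
    intro u v
    by_cases hab : u = a ∧ v = b
    · exact .inr (.inl hab)
    by_cases hba : u = b ∧ v = a
    · exact .inr (.inr hba)
    exact .inl (h.edge_iff u v hab hba)
  have hends : f i ≠ f (i + 2) := hf.apply_ne (by omega) hi
  rcases reversed_iff (f i) (f (i + 1)) with hleft | hleft <;>
    rcases reversed_iff (f (i + 2)) (f (i + 1)) with hright | hright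
  · rw [hleft, hright]
  · have hnot := h.not_edge_left hf hi hright
    exact iff_of_false (fun hc => hnot hc.1) fun hc => hnot (hleft.2 hc.1)
  · have hnot := h.not_edge_right hf hi hleft
    exact iff_of_false (fun hc => hnot hc.2) fun hc => hnot (hright.2 hc.2)
  · have hab := edge_ne h.edge
    grind

theorem replace_collider (h : D.IsCoveredReversal D' a b) (hf : D.IsActiveWalk S x y f n)
    (hi : i + 2 ≤ n) (ha : f (i + 1) = a) (hleft : D.edge (f i) a) (hright : D.edge (f (i + 2)) a)
    (hb : b ∈ D.ancestors S) : D.IsActiveWalk S x y (Function.update f (i + 1) b) n := by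
  have hleft' := h.edge_head_of_edge_tail hleft
  have hright' := h.edge_head_of_edge_tail hright
  refine hf.update_interior hi (.inl hleft') (.inr hright') ?_
    ⟨fun _ => hb, fun hc => absurd ⟨hleft', hright'⟩ hc⟩ fun hact => ?_
  · rintro j rfl
    exact (hf.triple j (by omega)).congr_right
      (iff_of_false (ha ▸ edge_asymm hleft) (edge_asymm hleft'))
  · exact hact.congr_left (iff_of_false (ha ▸ edge_asymm hright) (edge_asymm hright'))

/-- If a collider at `a` becomes inactive after the reversal, then `b` is an ancestor of `S` and
can take its place. -/
theorem exists_isShortestActiveWalk_collider (h : D.IsCoveredReversal D' a b)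
    (hf : D.IsShortestActiveWalk S x y f n) :
    ∃ g, D.IsShortestActiveWalk S x y g n ∧ ∀ i, i + 2 ≤ n → g (i + 1) = a →
      D.edge (g i) a → D.edge (g (i + 2)) a → a ∈ D'.ancestors S := by
  by_contra! hcon
  obtain ⟨i, hi, ha, hleft, hright, hanc⟩ := hcon f hf
  have ha' : a ∈ D.ancestors S := by
    have hact := (hf.triple i hi).1
    rw [ha] at hact
    exact hact ⟨hleft, hright⟩
  have hb : b ∈ D.ancestors S := ((h.mem_ancestors_or ha').resolve_left hanc).2.1
  obtain ⟨j, hj, hja, -⟩ :=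
    hcon _ ⟨h.replace_collider hf.toIsWalk hi ha hleft hright hb, hf.le_length⟩
  rcases eq_or_ne (j + 1) (i + 1) with hji | hji
  · rw [hji, Function.update_self] at hja
    exact edge_ne h.edge hja.symm
  · rw [Function.update_of_ne hji] at hja
    exact hji (hf.injOn (Nat.le_of_succ_le hj) (Nat.le_of_succ_le hi) (hja.trans ha.symm))

theorem not_dSep (h : D.IsCoveredReversal D' a b) (hD : ¬ D.dSep x y S) : ¬ D'.dSep x y S := by
  obtain ⟨f₀, n₀, hf₀⟩ := not_dSep_iff_exists_isActiveWalk.1 hD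
  obtain ⟨f₁, n, hf₁⟩ := hf₀.exists_shortest
  obtain ⟨f, hf, hcollider⟩ := h.exists_isShortestActiveWalk_collider hf₁
  refine not_dSep_iff_exists_isActiveWalk.2 ⟨f, n, hf.first, hf.last,
    fun i hi => h.adj_imp (hf.step i hi), fun i hi => ?_⟩
  rw [Active, ← h.collider_iff hf hi]
  refine ⟨fun hc => ?_, (hf.triple i hi).2⟩
  rcases h.mem_ancestors_or ((hf.triple i hi).1 hc) with hanc | ⟨ha, _⟩
  · exact hanc
  · rw [ha] at hc ⊢
    exact hcollider i hi ha hc.1 hc.2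

theorem mEquiv (h : D.IsCoveredReversal D' a b) : D.MEquiv D' := fun _ _ _ =>
  not_iff_not.1 ⟨h.not_dSep, h.symm.not_dSep⟩

end Dag.IsCoveredReversal

/-! ### DAGs with the same v-structures are Markov equivalent -/

namespace Dag

open Relation

variable {D D' : Dag V} {x y : V}

theorem wellFounded_transGen [Finite V] (D : Dag V) : WellFounded (TransGen D.edge) :=
  have : Std.Irrefl (TransGen D.edge) := ⟨D.transGen_irrefl⟩
  Finite.wellFounded_of_trans_of_irrefl _

theorem wellFounded_swap_transGen [Finite V] (D : Dag V) :
    WellFounded (Function.swap (TransGen D.edge)) :=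
  have : Std.Irrefl (Function.swap (TransGen D.edge)) := ⟨D.transGen_irrefl⟩
  have : IsTrans V (Function.swap (TransGen D.edge)) := ⟨fun _ _ _ h h' => h'.trans h⟩
  Finite.wellFounded_of_trans_of_irrefl _

/-- The edges of `D` into proper ancestors of `b` are edges of `D'`. -/
def AgreesOnAncestors (D D' : Dag V) (b : V) : Prop :=
  ∀ u v, TransGen D.edge v b → D.edge u v → D'.edge u v

/-- The edges of `D` that are reversed in `D'`. -/
def reversedEdges (D D' : Dag V) : Set (V × V) := {e | D.edge e.1 e.2 ∧ D'.edge e.2 e.1}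

theorem CoveredChildren.reversedEdges_reverse_ssubset (h : D.CoveredChildren x {y})
    (hyx : D'.edge y x) : h.reverse.reversedEdges D' ⊂ D.reversedEdges D' := by
  refine (Set.ssubset_iff_of_subset ?_).2 ⟨(x, y), ⟨h.child y rfl, hyx⟩, fun hxy => ?_⟩
  · rintro ⟨u, v⟩ ⟨⟨huv, _⟩ | ⟨hv, hu⟩, hvu⟩
    · exact ⟨huv, hvu⟩
    · obtain rfl : u = y := hu
      obtain rfl : v = x := hv
      exact absurd hyx (edge_asymm hvu)
  · exact edge_asymm (h.reverse_edge_of_mem rfl) hxy.1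

end Dag

namespace StructEquiv

open Relation Dag

variable {D D' : Dag V} {a b w x y z : V}

theorem coveredChildren_of_agreesOnAncestors (h : StructEquiv D D') (hxy : D.edge x y)
    (hyx : D'.edge y x) (hagree : D.AgreesOnAncestors D' y)
    (hmax : ∀ u, D.edge u y → D'.edge y u → ¬ TransGen D.edge x u) :
    D.CoveredChildren x {y} where
  child := by
    rintro _ rfl
    exact hxy
  edge_of_edge := by
    intro u hux q hq
    rw [Set.mem_singleton_iff.1 hq]
    have hux' := hagree u x (.single hxy) hux
    have huy : u ≠ y := by
      rintro rfl
      exact edge_asymm hux hxy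
    have hadj := (h.adj_iff u y).2 (h.symm.adj_of_reversed hux' hyx hxy huy)
    exact hadj.edge_of_not_edge (not_edge_of_edge_of_edge hux hxy)
  source := by
    intro u q hq huy
    rw [Set.mem_singleton_iff.1 hq] at huy
    rcases eq_or_ne u x with rfl | hux
    · exact .inl rfl
    refine .inr (.inl ((h.adj_of_reversed huy hxy hyx hux).edge_of_not_edge fun hxu => ?_))
    have hxu' := hagree x u (.single huy) hxu
    rcases h.edge_or huy with huy' | hyu'
    · exact not_edge_of_edge_of_edge hxu' huy' hyx
    · exact hmax u huy hyu' (.single hxu)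
  adj := Set.pairwise_singleton _ _

theorem exists_coveredChildren [Finite V] (h : StructEquiv D D') (hwz : D.edge w z)
    (hzw : D'.edge z w) : ∃ x y, D.Anc y z ∧ D.CoveredChildren x {y} ∧ D'.edge y x := by
  obtain ⟨y, ⟨hyz, x₀, hx₀⟩, hmin⟩ := D.wellFounded_transGen.has_min
    {y | D.Anc y z ∧ ∃ x, D.edge x y ∧ D'.edge y x} ⟨z, .refl, w, hwz, hzw⟩
  obtain ⟨x, ⟨hxy, hyx⟩, hmax⟩ := D.wellFounded_swap_transGen.has_min
    {x | D.edge x y ∧ D'.edge y x} ⟨x₀, hx₀⟩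
  have hagree : D.AgreesOnAncestors D' y := fun u v hvy huv =>
    (h.edge_or huv).resolve_right fun hvu => hmin v ⟨hvy.to_reflTransGen.trans hyz, u, huv, hvu⟩ hvy
  exact ⟨x, y, hyz,
    h.coveredChildren_of_agreesOnAncestors hxy hyx hagree fun u hu hu' => hmax u ⟨hu, hu'⟩, hyx⟩

theorem reversal_induction [Finite V] {motive : Dag V → Prop}
    (step : ∀ D, StructEquiv D D' →
      (∀ x y (hc : D.CoveredChildren x {y}), D'.edge y x → motive hc.reverse) → motive D)
    (h : StructEquiv D D') : motive D := by
  induction hR : D.reversedEdges D' using WellFoundedLT.induction generalizing D with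
  | ind R ih =>
    subst hR
    exact step D h fun x y hc hyx => ih _ (hc.reversedEdges_reverse_ssubset hyx)
      (hc.structEquiv_reverse.symm.trans h) rfl

theorem eq_of_forall_not_reversed (h : StructEquiv D D')
    (hno : ∀ u v, D.edge u v → ¬ D'.edge v u) : D = D' := by
  have hedge : D.edge = D'.edge := by
    funext u v
    refine propext ⟨fun huv => (h.edge_or huv).resolve_right (hno u v huv), fun huv => ?_⟩
    exact (h.symm.edge_or huv).resolve_right fun hvu => hno v u hvu huv
  cases D
  cases D'
  congr

theorem mEquiv [Finite V] (h : StructEquiv D D') : D.MEquiv D' := by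
  refine reversal_induction (motive := fun D => D.MEquiv D') (fun D h ih => ?_) h
  by_cases hno : ∀ u v, D.edge u v → ¬ D'.edge v u
  · rw [h.eq_of_forall_not_reversed hno]
    exact fun _ _ _ => Iff.rfl
  · push Not at hno
    obtain ⟨u, v, huv, hvu⟩ := hno
    obtain ⟨x, y, -, hc, hyx⟩ := h.exists_coveredChildren huv hvu
    exact hc.isCoveredReversal.mEquiv.trans (ih x y hc hyx)

/-! ### Triangles in the CPDAG -/

theorem exists_agreesOnAncestors [Finite V] (h : StructEquiv D D') (hab : D.edge a b) :
    ∃ D₁, StructEquiv D₁ D' ∧ D₁.edge a b ∧ D₁.AgreesOnAncestors D' b := by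
  revert hab
  refine reversal_induction (motive := fun D => D.edge a b →
    ∃ D₁, StructEquiv D₁ D' ∧ D₁.edge a b ∧ D₁.AgreesOnAncestors D' b) (fun D h ih hab => ?_) h
  by_cases hagree : D.AgreesOnAncestors D' b
  · exact ⟨D, h, hab, hagree⟩
  · unfold AgreesOnAncestors at hagree
    push Not at hagree
    obtain ⟨u, v, hvb, huv, huv'⟩ := hagree
    obtain ⟨x, y, hyv, hc, hyx⟩ :=
      h.exists_coveredChildren huv ((h.edge_or huv).resolve_left huv')
    refine ih x y hc hyx (.inl ⟨hab, ?_⟩)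
    rintro ⟨-, rfl⟩
    exact D.transGen_irrefl v (hvb.trans_left hyv)

theorem coveredChildren_of_edge_of_agreesOnAncestors {D₁ D₂ : Dag V} {b c : V}
    (h : StructEquiv D₁ D₂) (hagree : D₁.AgreesOnAncestors D₂ b) (hcb : D₁.edge c b)
    (hbc : D₂.edge b c) : D₁.CoveredChildren c {q | D₁.edge c q ∧ D₁.edge q b} := by
  have edge_of_adj : ∀ {u v}, D₁.edge u v → D₁.edge v b → D₁.Adj u b → D₁.edge u b :=
    fun huv hvb hadj => hadj.edge_of_not_edge (not_edge_of_edge_of_edge huv hvb)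
  have edge_two : ∀ q, D₁.edge c q → D₁.edge q b → D₂.edge b q := by
    intro q hcq hqb
    have hcq' := hagree c q (.single hqb) hcq
    exact ((h.adj_iff b q).1 (.inr hqb)).edge_of_not_edge (not_edge_of_edge_of_edge hbc hcq')
  have edge_into_b : ∀ u v, D₁.edge u v → D₁.edge v b → D₂.edge b v → D₁.edge u b := by
    intro u v huv hvb hbv
    have huv' := hagree u v (.single hvb) huv
    have hub : u ≠ b := by
      rintro rfl
      exact edge_asymm huv hvb
    exact edge_of_adj huv hvb ((h.adj_iff u b).2 (h.symm.adj_of_reversed huv' hbv hvb hub))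
  refine ⟨fun q hq => hq.1, fun u huc q ⟨hcq, hqb⟩ => ?_, fun u q ⟨hcq, hqb⟩ huq => ?_, ?_⟩
  · have hub := edge_into_b u c huc hcb hbc
    have huq : u ≠ q := by
      rintro rfl
      exact edge_asymm huc hcq
    exact (h.adj_of_reversed hub hqb (edge_two q hcq hqb) huq).edge_of_not_edge
      (not_edge_of_edge_of_edge huc hcq)
  · have hub := edge_into_b u q huq hqb (edge_two q hcq hqb)
    rcases eq_or_ne u c with rfl | huc
    · exact .inl rfl
    · exact .inr ((h.adj_of_reversed hub hcb hbc huc).imp id fun hcu => ⟨hcu, hub⟩)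
  · exact fun q hq q' hq' hne =>
      (h.adj_of_reversed hq'.2 hq.2 (edge_two q hq.1 hq.2) hne.symm).symm

end StructEquiv

namespace Dag

variable {D : Dag V} {a b c : V}

theorem Adj.exists_mEquiv_edge (hadj : D.Adj a b) (hba : ¬ D.CpDir b a) :
    ∃ D', D.MEquiv D' ∧ D'.edge a b := by
  unfold CpDir at hba
  push Not at hba
  obtain ⟨D', hD', hba'⟩ := hba
  exact ⟨D', hD', (hD'.adj_imp hadj).edge_of_not_edge hba'⟩

theorem not_cpDir_of_triangle [Finite V] (hab : D.Adj a b) (hbc : D.Adj b c)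
    (hba : ¬ D.CpDir b a) (hcb : ¬ D.CpDir c b) : ¬ D.CpDir c a := by
  intro hca
  obtain ⟨D₀, hD₀, hab₀⟩ := hab.exists_mEquiv_edge hba
  obtain ⟨D₂, hD₂, hbc₂⟩ := hbc.exists_mEquiv_edge hcb
  obtain ⟨D₁, hD₁₂, hab₁, hagree⟩ :=
    (hD₀.symm.trans hD₂).structEquiv.exists_agreesOnAncestors hab₀
  have hD₁ : D.MEquiv D₁ := hD₂.trans hD₁₂.symm.mEquiv
  have hca₁ : D₁.edge c a := hca D₁ hD₁
  have hcb₁ : D₁.edge c b :=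
    (hD₁.adj_imp hbc.symm).edge_of_not_edge (not_edge_of_edge_of_edge hca₁ hab₁)
  have hcov := hD₁₂.coveredChildren_of_edge_of_agreesOnAncestors hagree hcb₁ hbc₂
  have hca₃ := hca hcov.reverse (hD₁.trans hcov.structEquiv_reverse.mEquiv)
  exact edge_asymm hca₃ (hcov.reverse_edge_of_mem ⟨hca₁, hab₁⟩)

end Dag

/-- If `p` is a possibly directed path from `X` to `Y` in the CPDAG `G` of
the MEC of a DAG, then some subsequence of the nodes of `p` forms an unshielded possibly
directed path from `X` to `Y` in `G`. -/
theorem exists_unshielded_possiblyDirected_subsequence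
    {V : Type*} [Fintype V] (D : Dag V) (X Y : V) (hXY : X ≠ Y)
    (p : GPath D.Adj X Y) (hp : p.CpPossiblyDirected) :
    ∃ q : GPath D.Adj X Y, q.CpPossiblyDirected ∧ q.Unshielded ∧
      ∃ g : Fin (q.n + 1) → Fin (p.n + 1), StrictMono g ∧ ∀ i, q.f i = p.f (g i) := by
  let A : Fin (p.n + 1) → Fin (p.n + 1) → Prop := fun k l =>
    k < l ∧ D.Adj (p.f k) (p.f l) ∧ ¬ D.CpDir (p.f l) (p.f k)
  let indices : GPath A 0 (Fin.last p.n) :=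
    { n := p.n
      f := id
      inj := Function.injective_id
      first := rfl
      last := rfl
      adj := fun i => ⟨i.castSucc_lt_succ, p.adj i, hp i⟩ }
  obtain ⟨g, n, hg⟩ :=
    (indices.isWalk_seq (B := fun _ _ _ => True) fun _ _ => trivial).exists_shortest
  have hmono : StrictMono fun i : Fin (n + 1) => g i :=
    Fin.strictMono_iff_lt_succ.2 fun i => (hg.step i i.2).1
  let q : GPath D.Adj X Y :=
    { n := n
      f := fun i => p.f (g i)
      inj := p.inj.comp hmono.injective
      first := (congrArg p.f hg.first).trans p.first
      last := (congrArg p.f hg.last).trans p.last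
      adj := fun i => (hg.step i i.2).2.1 }
  refine ⟨q, fun i => (hg.step i i.2).2.2, fun i hi hadj => ?_, fun i => g i, hmono, fun _ => rfl⟩
  obtain ⟨hlt₁, hadj₁, hdir₁⟩ := hg.step i (by exact Nat.lt_of_succ_lt hi)
  obtain ⟨hlt₂, hadj₂, hdir₂⟩ := hg.step (i + 1) hi
  exact hg.false_of_shortcut hi
    ⟨hlt₁.trans hlt₂, hadj, Dag.not_cpDir_of_triangle hadj₁ hadj₂ hdir₁ hdir₂⟩
    (fun _ _ => id) id
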